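/- arXiv:1807.01813 — 7 statements merged into one kernel-verified Lean document; each statement's English description precedes it below -/
import Mathlib

section
/- For every τ ∈ [0, 2π], v(τ)^p + v(2π − τ)^p > 0; consequently the function w(τ) = 2π·v(τ)^p / (v(τ)^p + v(2π − τ)^p) is well defined and infinitely differentiable on a neighborhood of [0, 2π]. -/
/-!
Writing `s = (τ - π) / π`, one has `v(τ) = (1/2 - 1/p) s³ + s/p + 1/2`, an odd function of `s` plus
`1/2`. Hence `v(τ) + v(2π - τ) = 1` (`vCK_add_reflect`), and for `p ≥ 2` and `s ≥ -1` the expression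
`(1/2 - 1/p) (s³ + 1) + (s + 1) / p` shows `v(τ) ≥ 0` (`vCK_nonneg`). On `[0, 2π]` both values of `v`
are therefore nonnegative with sum `1`, so one of them is positive and so is the denominator of `w`.
The denominator is a polynomial in `τ`, so its nonvanishing set is an open neighbourhood of
`[0, 2π]` on which `w` is a smooth quotient.
-/

open Real

/-- The function `v` from equation (colt_kress_2), depending on an integer parameter `p`. -/
noncomputable def vCK (p : ℕ) (τ : ℝ) : ℝ :=
  (1 / (p : ℝ) - 1 / 2) * ((π - τ) / π) ^ 3 + (1 / (p : ℝ)) * ((τ - π) / π) + 1 / 2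

/-- The Colton–Kress change of variables `w` from equation (colt_kress_1). -/
noncomputable def wCK (p : ℕ) (τ : ℝ) : ℝ :=
  2 * π * (vCK p τ) ^ p / ((vCK p τ) ^ p + (vCK p (2 * π - τ)) ^ p)

lemma vCK_add_reflect (p : ℕ) (τ : ℝ) : vCK p τ + vCK p (2 * π - τ) = 1 := by
  unfold vCK
  have h1 : (π - (2 * π - τ)) / π = -((π - τ) / π) := by ring
  have h2 : (2 * π - τ - π) / π = -((τ - π) / π) := by ring
  rw [h1, h2]
  ring

lemma vCK_nonneg (p : ℕ) (hp : 2 ≤ p) (τ : ℝ) (hτ : 0 ≤ τ) : 0 ≤ vCK p τ := by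
  have hπ : 0 < π := Real.pi_pos
  have hs : 0 ≤ (τ - π) / π + 1 := by
    have h : (τ - π) / π + 1 = τ / π := by field_simp; ring
    rw [h]
    positivity
  have hp' : (2 : ℝ) ≤ p := by exact_mod_cast hp
  have ha : 0 ≤ 1 / 2 - 1 / (p : ℝ) :=
    sub_nonneg.mpr (one_div_le_one_div_of_le two_pos hp')
  have hq : 0 ≤ 1 / (p : ℝ) := by positivity
  unfold vCK
  have h1 : (π - τ) / π = -((τ - π) / π) := by ring
  rw [h1]
  generalize (τ - π) / π = s at *
  have hc : 0 ≤ s ^ 3 + 1 := by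
    have h : s ^ 3 + 1 = (s + 1) * ((s - 1 / 2) ^ 2 + 3 / 4) := by ring
    rw [h]
    positivity
  nlinarith [mul_nonneg ha hc, mul_nonneg hq hs]

lemma contDiff_vCK (p : ℕ) : ContDiff ℝ (⊤ : ℕ∞) (vCK p) := by
  unfold vCK
  fun_prop

lemma contDiff_wCK_denom (p : ℕ) :
    ContDiff ℝ (⊤ : ℕ∞) (fun τ => (vCK p τ) ^ p + (vCK p (2 * π - τ)) ^ p) :=
  ((contDiff_vCK p).pow p).add
    (((contDiff_vCK p).comp (contDiff_const.sub contDiff_id)).pow p)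

lemma wCK_denom_pos (p : ℕ) (hp : 2 ≤ p) (τ : ℝ) (hτ : τ ∈ Set.Icc (0 : ℝ) (2 * π)) :
    0 < (vCK p τ) ^ p + (vCK p (2 * π - τ)) ^ p := by
  have h1 := vCK_nonneg p hp τ hτ.1
  have h2 := vCK_nonneg p hp (2 * π - τ) (sub_nonneg.mpr hτ.2)
  have h3 := vCK_add_reflect p τ
  rcases h1.lt_or_eq with h | h
  · exact add_pos_of_pos_of_nonneg (pow_pos h p) (pow_nonneg h2 p)
  · exact add_pos_of_nonneg_of_pos (pow_nonneg h1 p) (pow_pos (by linarith) p)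

theorem wCK_well_defined_and_smooth (p : ℕ) (hp : 2 ≤ p) :
    (∀ τ ∈ Set.Icc (0 : ℝ) (2 * π), 0 < (vCK p τ) ^ p + (vCK p (2 * π - τ)) ^ p) ∧
    ∃ U : Set ℝ, IsOpen U ∧ Set.Icc (0 : ℝ) (2 * π) ⊆ U ∧ ContDiffOn ℝ (⊤ : ℕ∞) (wCK p) U := by
  refine ⟨wCK_denom_pos p hp,
    {τ | (vCK p τ) ^ p + (vCK p (2 * π - τ)) ^ p ≠ 0},
    isOpen_ne_fun (contDiff_wCK_denom p).continuous continuous_const,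
    fun τ hτ => (wCK_denom_pos p hp τ hτ).ne', ?_⟩
  exact (contDiff_const.mul ((contDiff_vCK p).pow p)).contDiffOn.div
    (contDiff_wCK_denom p).contDiffOn (fun τ hτ => hτ)
end

section
/- The function w restricted to [0, 2π] is a strictly increasing bijection from [0, 2π] onto [0, 2π]. -/
/-!
In the variable `s = (τ - π) / π`, `v` is `(1/2 - 1/p) s³ + s/p + 1/2`, an odd function plus `1/2`.
Since `p ≥ 2`, the cubic coefficient is nonnegative and the linear one positive, so `v` is strictly
increasing, with `v 0 = 0`, `v (2π) = 1` and `v τ + v (2π - τ) = 1`. Hence on `[0, 2π]`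
`w = 2π aᵖ / (aᵖ + (1 - a)ᵖ)` with `a = v τ ∈ [0, 1]`, and for `a < b` in `[0, 1]` the inequality
between the two quotients reduces, after cross-multiplication, to `(a (1 - b))ᵖ < (b (1 - a))ᵖ`.
Finally `w 0 = 0`, `w (2π) = 2π` and `w` is continuous, so the intermediate value theorem gives
surjectivity.
-/

open Real

lemma vCK_reflect (p : ℕ) (τ : ℝ) : vCK p (2 * π - τ) = 1 - vCK p τ := by
  unfold vCK
  ring

lemma vCK_zero (p : ℕ) : vCK p 0 = 0 := by
  have : π ≠ 0 := pi_ne_zero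
  unfold vCK
  rw [sub_zero, zero_sub, neg_div, div_self this]
  ring

lemma vCK_two_pi (p : ℕ) : vCK p (2 * π) = 1 := by
  have h := vCK_reflect p 0
  rwa [sub_zero, vCK_zero, sub_zero] at h

lemma vCK_strictMono (p : ℕ) (hp : 2 ≤ p) : StrictMono (vCK p) := by
  intro x y hxy
  have hp' : (2 : ℝ) ≤ p := by exact_mod_cast hp
  have hc : 0 ≤ 1 / 2 - 1 / (p : ℝ) :=
    sub_nonneg.2 (one_div_le_one_div_of_le two_pos hp')
  have hd : 0 < 1 / (p : ℝ) := by positivity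
  have hs : (x - π) / π < (y - π) / π :=
    div_lt_div_of_pos_right (by linarith) pi_pos
  have hodd : Odd 3 := by decide
  have h3 : ((x - π) / π) ^ 3 ≤ ((y - π) / π) ^ 3 := hodd.strictMono_pow.monotone hs.le
  have key : ∀ t, vCK p t =
      (1 / 2 - 1 / (p : ℝ)) * ((t - π) / π) ^ 3 + 1 / (p : ℝ) * ((t - π) / π) + 1 / 2 := by
    intro t
    unfold vCK
    ring
  rw [key, key]
  have h1 := mul_le_mul_of_nonneg_left h3 hc
  have h2 := mul_lt_mul_of_pos_left hs hd
  linarith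

lemma vCK_mem (p : ℕ) (hp : 2 ≤ p) {τ : ℝ} (h : τ ∈ Set.Icc 0 (2 * π)) :
    0 ≤ vCK p τ ∧ vCK p τ ≤ 1 := by
  have hm := (vCK_strictMono p hp).monotone
  exact ⟨vCK_zero p ▸ hm h.1, vCK_two_pi p ▸ hm h.2⟩

lemma pow_add_one_sub_pow_pos (p : ℕ) {a : ℝ} (h0 : 0 ≤ a) (h1 : a ≤ 1) :
    0 < a ^ p + (1 - a) ^ p := by
  rcases h0.eq_or_lt with rfl | h
  · have : (0 : ℝ) ≤ 0 ^ p := by positivity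
    simp only [sub_zero, one_pow]
    linarith
  · have : 0 ≤ (1 - a) ^ p := pow_nonneg (by linarith) p
    positivity

lemma wCK_eq (p : ℕ) (τ : ℝ) :
    wCK p τ = 2 * π * vCK p τ ^ p / (vCK p τ ^ p + (1 - vCK p τ) ^ p) := by
  rw [wCK, vCK_reflect]

lemma wCK_strictMonoOn (p : ℕ) (hp : 2 ≤ p) :
    StrictMonoOn (wCK p) (Set.Icc 0 (2 * π)) := by
  intro x hx y hy hxy
  obtain ⟨ha0, ha1⟩ := vCK_mem p hp hx
  obtain ⟨hb0, hb1⟩ := vCK_mem p hp hy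
  have hab := vCK_strictMono p hp hxy
  rw [wCK_eq, wCK_eq]
  generalize vCK p x = a at *
  generalize vCK p y = b at *
  rw [div_lt_div_iff₀ (pow_add_one_sub_pow_pos p ha0 ha1) (pow_add_one_sub_pow_pos p hb0 hb1)]
  have h : (a * (1 - b)) ^ p < (b * (1 - a)) ^ p :=
    pow_lt_pow_left₀ (by linarith) (mul_nonneg ha0 (by linarith)) (by omega)
  rw [mul_pow, mul_pow] at h
  have h' := mul_lt_mul_of_pos_left h two_pi_pos
  linarith

lemma wCK_continuousOn (p : ℕ) (hp : 2 ≤ p) :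
    ContinuousOn (wCK p) (Set.Icc 0 (2 * π)) := by
  have hv : Continuous (vCK p) := by
    unfold vCK
    fun_prop
  rw [funext (wCK_eq p)]
  refine ContinuousOn.div (by fun_prop) (by fun_prop) fun x hx => ?_
  obtain ⟨h0, h1⟩ := vCK_mem p hp hx
  exact (pow_add_one_sub_pow_pos p h0 h1).ne'

theorem wCK_strictMono_bijective (p : ℕ) (hp : 2 ≤ p) :
    StrictMonoOn (wCK p) (Set.Icc 0 (2 * π)) ∧
    Set.BijOn (wCK p) (Set.Icc 0 (2 * π)) (Set.Icc 0 (2 * π)) := by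
  have hmono := wCK_strictMonoOn p hp
  have hp0 : p ≠ 0 := by omega
  have hpi : (0 : ℝ) ≤ 2 * π := two_pi_pos.le
  have h0 : wCK p 0 = 0 := by
    simp [wCK_eq, vCK_zero, hp0]
  have h1 : wCK p (2 * π) = 2 * π := by
    simp [wCK_eq, vCK_two_pi, hp0]
  refine ⟨hmono, fun x hx => ⟨?_, ?_⟩, hmono.injOn, ?_⟩
  · rw [← h0]
    exact hmono.monotoneOn (Set.left_mem_Icc.2 hpi) hx hx.1
  · rw [← h1]
    exact hmono.monotoneOn hx (Set.right_mem_Icc.2 hpi) hx.2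
  · have h := intermediate_value_Icc hpi (wCK_continuousOn p hp)
    rwa [h0, h1] at h
end

section
/- The derivatives of w of all orders k with 1 ≤ k ≤ p − 1 vanish at the endpoints: the k-th iterated derivative of w at τ = 0 equals 0 and the k-th iterated derivative of w at τ = 2π equals 0, for every integer k with 1 ≤ k ≤ p − 1. -/
/-!
At `τ = 0` one has `v τ = 0` and `v (2π - τ) = 1`, so near `0` the function `w` is `v ^ p` times an
analytic function and vanishes to order at least `p` there. Where the denominator is nonzero,
`w τ = 2π - 2π v (2π - τ) ^ p / (v τ ^ p + v (2π - τ) ^ p)`, so near `2π` the function `w - 2π`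
likewise vanishes to order at least `p`.
-/

open Real

/-- A `p`-th power of an analytic function vanishing at `x`, times an analytic function, has order
at least `p` at `x`. -/
lemma iteratedDeriv_pow_mul_eq_zero {f u : ℝ → ℝ} {x : ℝ} {p k : ℕ} (hf : AnalyticAt ℝ f x)
    (hu : AnalyticAt ℝ u x) (hfx : f x = 0) (hk : k < p) :
    iteratedDeriv k (fun t => f t ^ p * u t) x = 0 := by
  have hord : (p : ℕ∞) ≤ analyticOrderAt (f ^ p * u) x := by
    rw [analyticOrderAt_mul (hf.pow p) hu, analyticOrderAt_pow hf]
    have h1 : 1 ≤ analyticOrderAt f x :=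
      Order.one_le_iff_ne_zero.2 (hf.analyticOrderAt_ne_zero.2 hfx)
    calc (p : ℕ∞) = p • 1 := by simp
      _ ≤ p • analyticOrderAt f x := nsmul_le_nsmul_right h1 p
      _ ≤ _ := le_self_add
  exact (natCast_le_analyticOrderAt_iff_iteratedDeriv_eq_zero ((hf.pow p).mul hu)).1 hord k hk

lemma analyticAt_vCK (p : ℕ) (x : ℝ) : AnalyticAt ℝ (vCK p) x := by
  unfold vCK
  simp only [div_eq_mul_inv]
  fun_prop

lemma analyticAt_vCK_reflect (p : ℕ) (x : ℝ) : AnalyticAt ℝ (fun τ => vCK p (2 * π - τ)) x := by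
  unfold vCK
  simp only [div_eq_mul_inv]
  fun_prop

theorem wCK_iteratedDeriv_vanish_at_endpoints (p : ℕ) (hp : 2 ≤ p) :
    ∀ k : ℕ, 1 ≤ k → k ≤ p - 1 →
      iteratedDeriv k (wCK p) 0 = 0 ∧ iteratedDeriv k (wCK p) (2 * π) = 0 := by
  intro k hk1 hk
  have hkp : k < p := by omega
  have hp0 : p ≠ 0 := by omega
  have hD (x : ℝ) : AnalyticAt ℝ (fun τ => vCK p τ ^ p + vCK p (2 * π - τ) ^ p) x :=
    ((analyticAt_vCK p x).pow p).add ((analyticAt_vCK_reflect p x).pow p)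
  have hD0 : vCK p 0 ^ p + vCK p (2 * π - 0) ^ p ≠ 0 := by
    simp [vCK_zero, vCK_two_pi, hp0]
  have hD1 : vCK p (2 * π) ^ p + vCK p (2 * π - 2 * π) ^ p ≠ 0 := by
    simp [vCK_zero, vCK_two_pi, hp0]
  constructor
  · have hw : wCK p = fun τ =>
        vCK p τ ^ p * (2 * π / (vCK p τ ^ p + vCK p (2 * π - τ) ^ p)) := by
      funext τ
      rw [wCK]
      ring
    rw [hw]
    exact iteratedDeriv_pow_mul_eq_zero (analyticAt_vCK p 0)
      (analyticAt_const.div (hD 0) hD0) (vCK_zero p) hkp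
  · have hw : wCK p =ᶠ[nhds (2 * π)] fun τ => 2 * π -
        vCK p (2 * π - τ) ^ p * (2 * π / (vCK p τ ^ p + vCK p (2 * π - τ) ^ p)) := by
      filter_upwards [(hD (2 * π)).continuousAt.eventually_ne hD1] with τ hτ
      rw [wCK]
      field_simp
      ring
    rw [hw.iteratedDeriv_eq k, iteratedDeriv_const_sub hk1, iteratedDeriv_neg, neg_eq_zero]
    exact iteratedDeriv_pow_mul_eq_zero (analyticAt_vCK_reflect p (2 * π))
      (analyticAt_const.div (hD (2 * π)) hD1) (by simp [vCK_zero]) hkp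
end

section
/- Exactness of Fejér's first quadrature rule: for every polynomial P with real coefficients of degree at most N − 1, Σ_{j=0}^{N−1} ω_j P(x_j) = ∫_{−1}^{1} P(x) dx. -/
/-!
Both sides are linear in `P`, and the Chebyshev polynomials `T_k`, `k < N`, span the polynomials of
degree less than `N`, so it suffices to treat `P = T_k`, for which both sides equal `2 / (1 - k²)`
for `k` even and `0` for `k` odd.

* For the integral (`integral_chebyshev_T`), `T_{k+1} / (2(k+1)) - T_{k-1} / (2(k-1))` is an
  antiderivative of `T_k` when `k ≠ 1`.
* For the quadrature sum (`fejer_sum_chebyshev_T`), `T_k(x_j) = cos (k θ_j)`, and the discrete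
  orthogonality of the cosines at the angles `θ_j` (`sum_cos_mul_cos_fejerAngle`) leaves only the
  term `2ℓ = k` of the sum defining the weights. It applies because `2ℓ + k < 2N` for
  `ℓ ≤ N / 2` and `k ≤ N - 1`.
-/

open Real

/-- The Fejér (Chebyshev) angles `θ_j = π(2j+1)/(2N)`. -/
noncomputable def fejerAngle (N j : ℕ) : ℝ :=
  π * (2 * j + 1) / (2 * N)

/-- The Fejér (Chebyshev) nodes `x_j = cos θ_j`. -/
noncomputable def fejerNode (N j : ℕ) : ℝ :=
  Real.cos (fejerAngle N j)

/-- The weights of Fejér's first quadrature rule. -/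
noncomputable def fejerWeight (N j : ℕ) : ℝ :=
  (2 / N) * (1 - 2 * ∑ ℓ ∈ Finset.Icc 1 (N / 2),
    Real.cos (2 * ℓ * fejerAngle N j) / (4 * (ℓ : ℝ) ^ 2 - 1))

open Polynomial Polynomial.Chebyshev

theorem sum_cos_fejerAngle_of_not_dvd {N : ℕ} (hN : 0 < N) {k : ℤ} (hk : ¬ (2 * N : ℤ) ∣ k) :
    ∑ j ∈ Finset.range N, Real.cos (k * fejerAngle N j) = 0 := by
  have h := sumZeroes_T_of_not_dvd hk
  have hN' : (N : ℝ) ≠ 0 := by positivity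
  rw [sumZeroes, mul_eq_zero_iff_left (div_ne_zero Real.pi_ne_zero hN')] at h
  rw [← h]
  refine Finset.sum_congr rfl fun j _ => ?_
  rw [T_real_cos, fejerAngle]
  congr 1
  ring

/-- Discrete orthogonality of the cosines at the Fejér angles, for an even frequency `2ℓ > 0` and a
frequency `k`, in the range where the sum of the frequencies cannot reach the period `2N`. -/
theorem sum_cos_mul_cos_fejerAngle {N k l : ℕ} (hN : 0 < N) (hk : k < N) (hl : 1 ≤ l)
    (hl' : l ≤ N / 2) :
    ∑ j ∈ Finset.range N, Real.cos (2 * l * fejerAngle N j) * Real.cos (k * fejerAngle N j) =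
      if k = 2 * l then (N : ℝ) / 2 else 0 := by
  have hprod : ∀ j, Real.cos (2 * l * fejerAngle N j) * Real.cos (k * fejerAngle N j) =
      (Real.cos (((2 * l - k : ℤ) : ℝ) * fejerAngle N j) +
        Real.cos (((2 * l + k : ℤ) : ℝ) * fejerAngle N j)) / 2 := by
    intro j
    push_cast
    rw [sub_mul, add_mul, Real.cos_sub, Real.cos_add]
    ring
  have hadd : ¬ (2 * N : ℤ) ∣ (2 * l + k : ℤ) := fun h => by
    have := Int.le_of_dvd (by omega) h
    omega
  simp_rw [hprod]
  rw [← Finset.sum_div, Finset.sum_add_distrib, sum_cos_fejerAngle_of_not_dvd hN hadd]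
  split_ifs with h
  · subst h
    simp
  · have hsub : ¬ (2 * N : ℤ) ∣ (2 * l - k : ℤ) := fun h' => by
      have := Int.eq_zero_of_abs_lt_dvd h' (by rw [abs_lt]; omega)
      omega
    rw [sum_cos_fejerAngle_of_not_dvd hN hsub]
    simp

theorem fejer_sum_chebyshev_T {N k : ℕ} (hN : 0 < N) (hk : k < N) :
    ∑ j ∈ Finset.range N, fejerWeight N j * (T ℝ k).eval (fejerNode N j) =
      if Even k then 2 / (1 - (k : ℝ) ^ 2) else 0 := by
  have hN' : (N : ℝ) ≠ 0 := by positivity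
  have hexpand : ∑ j ∈ Finset.range N, fejerWeight N j * (T ℝ k).eval (fejerNode N j) =
      2 / N * (∑ j ∈ Finset.range N, Real.cos (k * fejerAngle N j) -
        2 * ∑ l ∈ Finset.Icc 1 (N / 2), (if k = 2 * l then (N : ℝ) / 2 else 0) /
          (4 * (l : ℝ) ^ 2 - 1)) := by
    have hswap : ∑ l ∈ Finset.Icc 1 (N / 2), (if k = 2 * l then (N : ℝ) / 2 else 0) /
          (4 * (l : ℝ) ^ 2 - 1) =
        ∑ j ∈ Finset.range N, (∑ l ∈ Finset.Icc 1 (N / 2),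
          Real.cos (2 * l * fejerAngle N j) / (4 * (l : ℝ) ^ 2 - 1)) *
            Real.cos (k * fejerAngle N j) := by
      simp_rw [Finset.sum_mul]
      rw [Finset.sum_comm]
      refine Finset.sum_congr rfl fun l hl => ?_
      rw [Finset.mem_Icc] at hl
      rw [← sum_cos_mul_cos_fejerAngle hN hk hl.1 hl.2, Finset.sum_div]
      exact Finset.sum_congr rfl fun j _ => by ring
    rw [hswap, Finset.mul_sum, ← Finset.sum_sub_distrib, Finset.mul_sum]
    refine Finset.sum_congr rfl fun j _ => ?_
    rw [fejerWeight, fejerNode, T_real_cos]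
    push_cast
    ring
  rw [hexpand]
  rcases Nat.eq_zero_or_pos k with rfl | hk0
  · have : ∀ l ∈ Finset.Icc 1 (N / 2),
        (if 0 = 2 * l then (N : ℝ) / 2 else 0) / (4 * (l : ℝ) ^ 2 - 1) = 0 := fun l hl => by
      rw [Finset.mem_Icc] at hl
      rw [if_neg (by omega), zero_div]
    rw [Finset.sum_eq_zero this]
    simp [hN']
  have hndvd : ¬ (2 * N : ℤ) ∣ (k : ℤ) := fun h => by
    have := Int.le_of_dvd (by omega) h
    omega
  have hC := sum_cos_fejerAngle_of_not_dvd hN hndvd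
  rw [Int.cast_natCast] at hC
  rw [hC]
  split_ifs with he
  · obtain ⟨m, rfl⟩ := he
    rw [Finset.sum_eq_single m]
    · rw [if_pos (by ring)]
      have hm : (1 : ℝ) ≤ m := by exact_mod_cast (by omega : 1 ≤ m)
      have h1 : 4 * (m : ℝ) ^ 2 - 1 ≠ 0 := by nlinarith
      have h2 : 1 - ((m + m : ℕ) : ℝ) ^ 2 = -(4 * (m : ℝ) ^ 2 - 1) := by push_cast; ring
      rw [h2]
      field_simp
      ring
    · intro l _ hl
      rw [if_neg (by omega), zero_div]
    · intro h
      exact absurd (Finset.mem_Icc.2 (by omega)) h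
  · rw [Finset.sum_eq_zero fun l _ => ?_]
    · simp
    · rw [if_neg fun h => he ⟨l, by omega⟩, zero_div]

theorem integral_chebyshev_T (k : ℕ) :
    ∫ x in (-1 : ℝ)..1, (T ℝ k).eval x = if Even k then 2 / (1 - (k : ℝ) ^ 2) else 0 := by
  rcases eq_or_ne k 1 with rfl | hk
  · simp
  have hk1 : (k : ℝ) - 1 ≠ 0 := sub_ne_zero.2 (by exact_mod_cast hk)
  have hk2 : (k : ℝ) + 1 ≠ 0 := by positivity
  have hderiv : ∀ x : ℝ, HasDerivAt (fun x => (T ℝ (k + 1)).eval x / (2 * (k + 1)) -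
      (T ℝ (k - 1)).eval x / (2 * (k - 1))) ((T ℝ k).eval x) x := by
    intro x
    convert! ((T ℝ (k + 1)).hasDerivAt x).div_const (2 * ((k : ℝ) + 1)) |>.sub
      (((T ℝ (k - 1)).hasDerivAt x).div_const (2 * ((k : ℝ) - 1))) using 1
    have h := congrArg (eval x) (two_mul_T_eq_U_sub_U ℝ ((k : ℤ) - 2))
    rw [T_derivative_eq_U, T_derivative_eq_U, add_sub_cancel_right, sub_sub]
    norm_num at h ⊢
    field_simp
    linear_combination h
  rw [intervalIntegral.integral_eq_sub_of_hasDerivAt (fun x _ => hderiv x)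
    ((T ℝ k).continuous.intervalIntegrable _ _)]
  have hk3 : 1 - (k : ℝ) ^ 2 ≠ 0 := by
    rw [show 1 - (k : ℝ) ^ 2 = -((k - 1) * (k + 1)) by ring]
    exact neg_ne_zero.2 (mul_ne_zero hk1 hk2)
  simp only [T_eval_one, T_eval_neg_one]
  split_ifs with he
  · have he' : Even (k : ℤ) := by exact_mod_cast he
    rw [Int.negOnePow_odd _ (he'.add_odd odd_one), Int.negOnePow_odd _ (he'.sub_odd odd_one)]
    push_cast
    field_simp
    ring
  · have ho : Odd (k : ℤ) := by exact_mod_cast Nat.not_even_iff_odd.1 he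
    rw [Int.negOnePow_even _ (ho.add_odd odd_one), Int.negOnePow_even _ (ho.sub_odd odd_one)]
    simp

theorem fejer_first_rule_exact (N : ℕ) (hN : 0 < N) (P : Polynomial ℝ)
    (hP : P.natDegree ≤ N - 1) :
    ∑ j ∈ Finset.range N, fejerWeight N j * P.eval (fejerNode N j) =
      ∫ x in (-1 : ℝ)..1, P.eval x := by
  have hmem : P ∈ degreeLT ℝ N := by
    rw [mem_degreeLT]
    exact degree_le_natDegree.trans_lt (by exact_mod_cast (by omega : P.natDegree < N))
  rw [← Sequence.span_degreeLT (chebyshevTsequence ℝ) (by simp)] at hmem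
  clear hP
  induction hmem using Submodule.span_induction with
  | mem Q hQ =>
    obtain ⟨k, hk, rfl⟩ := hQ
    exact (fejer_sum_chebyshev_T hN hk).trans (integral_chebyshev_T k).symm
  | zero => simp
  | add Q R _ _ hQ hR =>
    simp_rw [eval_add, mul_add, Finset.sum_add_distrib]
    rw [intervalIntegral.integral_add (Q.continuous.intervalIntegrable _ _)
      (R.continuous.intervalIntegrable _ _), hQ, hR]
  | smul c Q _ hQ =>
    simp_rw [eval_smul, smul_eq_mul, mul_left_comm _ c, ← Finset.mul_sum]
    rw [intervalIntegral.integral_const_mul, hQ]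
end

section
/- The weights of Fejér's first quadrature rule are strictly positive: ω_j > 0 for every j = 0, …, N − 1. -/
/-! Bounding every cosine by `1` (the denominators `4ℓ² - 1` are positive for `ℓ ≥ 1`), the sum in
the weight is at most `∑ 1 / (4ℓ² - 1)`, which telescopes: with `m = ⌊N/2⌋`, twice this sum is
`1 - 1 / (2m + 1) < 1`. -/

open Real

lemma two_mul_sum_inv_four_sq_sub_one (m : ℕ) :
    2 * ∑ ℓ ∈ Finset.Icc 1 m, 1 / (4 * (ℓ : ℝ) ^ 2 - 1) = 1 - 1 / (2 * (m : ℝ) + 1) := by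
  induction m with
  | zero => simp
  | succ k ih =>
    rw [Finset.sum_Icc_succ_top (by omega), mul_add, ih]
    have h1 : (2 * (k : ℝ) + 1) ≠ 0 := by positivity
    have h2 : (2 * (k : ℝ) + 3) ≠ 0 := by positivity
    have h3 : 4 * ((k + 1 : ℕ) : ℝ) ^ 2 - 1 = (2 * k + 1) * (2 * k + 3) := by
      push_cast; ring
    have h4 : 2 * ((k + 1 : ℕ) : ℝ) + 1 = 2 * k + 3 := by
      push_cast; ring
    rw [h3, h4]
    field_simp
    ring

theorem fejer_weights_positive (N : ℕ) (hN : 0 < N) :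
    ∀ j : ℕ, j ≤ N - 1 → 0 < fejerWeight N j := by
  intro j _
  have hle : ∑ ℓ ∈ Finset.Icc 1 (N / 2),
      Real.cos (2 * ℓ * fejerAngle N j) / (4 * (ℓ : ℝ) ^ 2 - 1) ≤
      ∑ ℓ ∈ Finset.Icc 1 (N / 2), 1 / (4 * (ℓ : ℝ) ^ 2 - 1) := by
    refine Finset.sum_le_sum fun ℓ hℓ => ?_
    have h1 : (1 : ℝ) ≤ ℓ := by exact_mod_cast (Finset.mem_Icc.mp hℓ).1
    exact div_le_div_of_nonneg_right (Real.cos_le_one _) (by nlinarith)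
  have hsum := two_mul_sum_inv_four_sq_sub_one (N / 2)
  have hpos : 0 < 1 / (2 * ((N / 2 : ℕ) : ℝ) + 1) := by positivity
  have hN' : (0 : ℝ) < N := by exact_mod_cast hN
  exact mul_pos (by positivity) (by linarith)
end

section
/- For every α ∈ (−1, 1), the map w_α is continuous and strictly increasing on [−1, 1] and is a bijection from [−1, 1] onto [−1, 1]. -/
/-!
The central symmetry `v(τ) + v(2π − τ) = 1` gives, for `s ∈ [0, 1]`,
`w(πs) / π = 2 g^p / (g^p + (1 - g)^p)` with `g = v(πs)`. The polynomial `g` increases strictly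
from `0` to `1/2` on `[0, 1]`, so the quotient `φ` (`phiCK` below) is continuous and increases
strictly from `0` to `1`.
Because `φ` vanishes at `0`, the jump of `sgn` is harmless and
`w_α(τ) = α + (1 - α) φ(max τ 0) - (1 + α) φ(max (-τ) 0)`,
from which continuity and strict monotonicity follow. As `w_α(±1) = ±1`, the intermediate
value theorem gives bijectivity.
-/

open Real

/-- The rectangular-polar change of variables `w_α` for `α ∈ (−1, 1)`. -/
noncomputable def wRP (p : ℕ) (α : ℝ) (τ : ℝ) : ℝ :=
  α + ((Real.sign τ - α) / π) * wCK p (π * |τ|)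

/-- The function `s ↦ v(πs)`, written without `π`. -/
noncomputable def gCK (p : ℕ) (s : ℝ) : ℝ :=
  (1 / (p : ℝ) - 1 / 2) * (1 - s) ^ 3 + (1 / (p : ℝ)) * (s - 1) + 1 / 2

/-- The function `s ↦ w(πs) / π`, expressed through `gCK`. -/
noncomputable def phiCK (p : ℕ) (s : ℝ) : ℝ :=
  2 * gCK p s ^ p / (gCK p s ^ p + (1 - gCK p s) ^ p)

lemma vCK_pi_mul (p : ℕ) (s : ℝ) : vCK p (π * s) = gCK p s := by
  have h1 : (π - π * s) / π = 1 - s := by field_simp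
  have h2 : (π * s - π) / π = s - 1 := by field_simp
  rw [vCK, gCK, h1, h2]

lemma wCK_pi_mul (p : ℕ) (s : ℝ) : wCK p (π * s) = π * phiCK p s := by
  have h : vCK p (2 * π - π * s) = 1 - gCK p s := by
    rw [show 2 * π - π * s = π * (2 - s) by ring, vCK_pi_mul, gCK, gCK]
    ring
  rw [wCK, h, vCK_pi_mul, phiCK]
  ring

lemma gCK_zero (p : ℕ) : gCK p 0 = 0 := by
  rw [gCK]; ring

lemma gCK_one (p : ℕ) : gCK p 1 = 1 / 2 := by
  rw [gCK]; ring

lemma gCK_strictMono {p : ℕ} (hp : 2 ≤ p) : StrictMono (gCK p) := by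
  intro s t hst
  have hp' : (2 : ℝ) ≤ p := by exact_mod_cast hp
  have hc : 0 < 1 / (p : ℝ) := by positivity
  have hc2 : 1 / (p : ℝ) ≤ 1 / 2 := one_div_le_one_div_of_le (by norm_num) hp'
  have h3 : (1 - t) ^ 3 ≤ (1 - s) ^ 3 :=
    (Odd.strictMono_pow (by decide : Odd 3)).monotone (by linarith)
  have h4 := mul_le_mul_of_nonneg_left h3 (sub_nonneg.2 hc2)
  have h5 := mul_lt_mul_of_pos_left hst hc
  simp only [gCK]
  linarith

lemma gCK_mem {p : ℕ} (hp : 2 ≤ p) {s : ℝ} (hs : s ∈ Set.Icc (0 : ℝ) 1) :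
    0 ≤ gCK p s ∧ gCK p s ≤ 1 / 2 := by
  have h0 := (gCK_strictMono hp).monotone hs.1
  have h1 := (gCK_strictMono hp).monotone hs.2
  rw [gCK_zero] at h0
  rw [gCK_one] at h1
  exact ⟨h0, h1⟩

lemma phiCK_den_pos {p : ℕ} (hp : 2 ≤ p) {s : ℝ} (hs : s ∈ Set.Icc (0 : ℝ) 1) :
    0 < gCK p s ^ p + (1 - gCK p s) ^ p := by
  obtain ⟨h0, h1⟩ := gCK_mem hp hs
  have := pow_pos (show 0 < 1 - gCK p s by linarith) p
  positivity

lemma phiCK_zero {p : ℕ} (hp : 2 ≤ p) : phiCK p 0 = 0 := by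
  rw [phiCK, gCK_zero, zero_pow (by omega)]
  simp

lemma phiCK_one (p : ℕ) : phiCK p 1 = 1 := by
  have h : (0 : ℝ) < (1 / 2) ^ p := by positivity
  rw [phiCK, gCK_one, show (1 : ℝ) - 1 / 2 = 1 / 2 by norm_num, ← two_mul]
  exact div_self (by positivity)

lemma phiCK_continuousOn {p : ℕ} (hp : 2 ≤ p) :
    ContinuousOn (phiCK p) (Set.Icc 0 1) := by
  have hg : Continuous (gCK p) := by unfold gCK; fun_prop
  unfold phiCK
  exact ContinuousOn.div (by fun_prop) (by fun_prop) fun s hs => (phiCK_den_pos hp hs).ne'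

lemma phiCK_strictMonoOn {p : ℕ} (hp : 2 ≤ p) :
    StrictMonoOn (phiCK p) (Set.Icc 0 1) := by
  intro s hs t ht hst
  have hp0 : p ≠ 0 := by omega
  obtain ⟨hs0, hs1⟩ := gCK_mem hp hs
  obtain ⟨ht0, ht1⟩ := gCK_mem hp ht
  have hg := gCK_strictMono hp hst
  have hx := pow_lt_pow_left₀ hg hs0 hp0
  have hy := pow_lt_pow_left₀ (show 1 - gCK p t < 1 - gCK p s by linarith) (by linarith) hp0
  have hy0 := pow_pos (show 0 < 1 - gCK p t by linarith) p
  have hx0 := pow_nonneg hs0 p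
  rw [phiCK, phiCK, div_lt_div_iff₀ (phiCK_den_pos hp hs) (phiCK_den_pos hp ht)]
  nlinarith [mul_lt_mul_of_pos_right hx hy0,
    mul_le_mul_of_nonneg_left hy.le (hx0.trans hx.le)]

/-- Since `φ 0 = 0`, the sign function can be traded for positive and negative parts. -/
lemma wRP_eq {p : ℕ} (hp : 2 ≤ p) (α τ : ℝ) :
    wRP p α τ = α + (1 - α) * phiCK p (max τ 0) - (1 + α) * phiCK p (max (-τ) 0) := by
  rw [wRP, wCK_pi_mul, ← mul_assoc, div_mul_cancel₀ _ pi_ne_zero]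
  rcases lt_trichotomy τ 0 with h | rfl | h
  · rw [Real.sign_of_neg h, abs_of_neg h, max_eq_right h.le, max_eq_left (by linarith),
      phiCK_zero hp]
    ring
  · simp [phiCK_zero hp]
  · rw [Real.sign_of_pos h, abs_of_pos h, max_eq_left h.le, max_eq_right (by linarith),
      phiCK_zero hp]
    ring

theorem wRP_continuous_strictMono_bijective (p : ℕ) (hp : 2 ≤ p)
    (α : ℝ) (hα : α ∈ Set.Ioo (-1 : ℝ) 1) :
    ContinuousOn (wRP p α) (Set.Icc (-1) 1) ∧
    StrictMonoOn (wRP p α) (Set.Icc (-1) 1) ∧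
    Set.BijOn (wRP p α) (Set.Icc (-1) 1) (Set.Icc (-1) 1) := by
  obtain ⟨hα0, hα1⟩ := hα
  have hpos : Set.MapsTo (fun τ : ℝ => max τ 0) (Set.Icc (-1) 1) (Set.Icc 0 1) :=
    fun τ hτ => ⟨le_max_right _ _, max_le hτ.2 zero_le_one⟩
  have hneg : Set.MapsTo (fun τ : ℝ => max (-τ) 0) (Set.Icc (-1) 1) (Set.Icc 0 1) :=
    fun τ hτ => ⟨le_max_right _ _, max_le (by linarith [hτ.1]) zero_le_one⟩
  have hcont : ContinuousOn (wRP p α) (Set.Icc (-1) 1) := by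
    rw [funext (wRP_eq hp α)]
    have h1 := (phiCK_continuousOn hp).comp (by fun_prop) hpos
    have h2 := (phiCK_continuousOn hp).comp (by fun_prop) hneg
    exact (continuousOn_const.add (continuousOn_const.mul h1)).sub (continuousOn_const.mul h2)
  have hmono : StrictMonoOn (wRP p α) (Set.Icc (-1) 1) := by
    intro a ha b hb hab
    have hφ := phiCK_strictMonoOn hp
    have h1 := hφ.monotoneOn (hpos ha) (hpos hb) (max_le_max_right 0 hab.le)
    have h2 := hφ.monotoneOn (hneg hb) (hneg ha) (max_le_max_right 0 (neg_le_neg hab.le))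
    dsimp only at h1 h2
    have h1' := mul_le_mul_of_nonneg_left h1 (show 0 ≤ 1 - α by linarith)
    have h2' := mul_le_mul_of_nonneg_left h2 (show 0 ≤ 1 + α by linarith)
    rw [wRP_eq hp, wRP_eq hp]
    -- The positive part increases strictly if `b > 0`, the negative part decreases strictly
    -- if `b ≤ 0`, since then `a < 0`.
    rcases lt_or_ge 0 b with h | h
    · have h3 := hφ (hpos ha) (hpos hb) (show max a 0 < max b 0 by
        rw [max_eq_left h.le]; exact max_lt hab h)
      dsimp only at h3
      have h3' := mul_lt_mul_of_pos_left h3 (show 0 < 1 - α by linarith)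
      linarith
    · have h3 := hφ (hneg hb) (hneg ha) (show max (-b) 0 < max (-a) 0 by
        rw [max_eq_left (show 0 ≤ -a by linarith)]; exact max_lt (by linarith) (by linarith))
      dsimp only at h3
      have h3' := mul_lt_mul_of_pos_left h3 (show 0 < 1 + α by linarith)
      linarith
  have hw1 : wRP p α 1 = 1 := by
    rw [wRP_eq hp, max_eq_left zero_le_one, max_eq_right (by norm_num), phiCK_one, phiCK_zero hp]
    ring
  have hwm1 : wRP p α (-1) = -1 := by
    rw [wRP_eq hp, max_eq_right (by norm_num), neg_neg, max_eq_left zero_le_one, phiCK_one,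
      phiCK_zero hp]
    ring
  have hm1 : (-1 : ℝ) ∈ Set.Icc (-1 : ℝ) 1 := by norm_num
  have h1 : (1 : ℝ) ∈ Set.Icc (-1 : ℝ) 1 := by norm_num
  refine ⟨hcont, hmono, ?_, hmono.injOn, ?_⟩
  · intro τ hτ
    have hl := hmono.monotoneOn hm1 hτ hτ.1
    have hu := hmono.monotoneOn hτ h1 hτ.2
    rw [hwm1] at hl
    rw [hw1] at hu
    exact ⟨hl, hu⟩
  · have h := intermediate_value_Icc (by norm_num : (-1 : ℝ) ≤ 1) hcont
    rwa [hwm1, hw1] at h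
end

section
/- Smoothing of an inverse-square-root edge singularity by a change of variables with vanishing derivatives: let p ≥ 4 be an even integer, let w : ℝ → ℝ be infinitely differentiable with w(0) = 0, with k-th derivative vanishing at 0 for every 1 ≤ k ≤ p − 1, and with p-th derivative at 0 strictly positive, and let Φ : ℝ → ℝ be infinitely differentiable. Then there exists δ > 0 such that the function f : [0, δ) → ℝ defined by f(x) = Φ(w(x))·w'(x)/√(w(x)) for x ∈ (0, δ) and f(0) = 0 is (p/2 − 1) times continuously differentiable on [0, δ). -/
/-!
The vanishing derivatives of `w` at `0` allow the smooth factorization `w x = x ^ p * g x` with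
`g` smooth and `g 0 > 0` (`exists_smooth_factor`, an iterated Hadamard lemma). Writing `p = 2 * q`,
it follows that `deriv w x = x ^ (p - 1) * h x` with `h x = p * g x + x * deriv g x` smooth, and
`√(w x) = x ^ q * √(g x)` for `x > 0`. Hence the integrand equals
`Φ (w x) * (x ^ (q - 1) * h x / √(g x))` for `x > 0`, and also at `x = 0` because `q ≥ 2`. This
expression is smooth wherever `g > 0`, which holds near `0`.

The quotient in one Hadamard step is `w x / x = ∫ t in 0..1, deriv w (t * x)`. Its smoothness, and
the values of its derivatives at `0`, come from differentiating the family of integrals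
`∫ t in 0..1, t ^ m * φ (t * x)` under the integral sign (`hasDerivAt_hadamardInt`).
-/

open Real

/-- The weighted average `∫₀¹ t ^ m φ(t x) dt`, a family closed under differentiation in `x`. -/
noncomputable def hadamardInt (m : ℕ) (φ : ℝ → ℝ) (x : ℝ) : ℝ :=
  ∫ t in (0 : ℝ)..1, t ^ m * φ (t * x)

lemma hasDerivAt_hadamardInt (m : ℕ) {φ : ℝ → ℝ} (hφ : ContDiff ℝ (⊤ : ℕ∞) φ) (x : ℝ) :
    HasDerivAt (hadamardInt m φ) (hadamardInt (m + 1) (deriv φ) x) x := by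
  have hφc : Continuous φ := hφ.continuous
  have hd : Continuous (deriv φ) := hφ.continuous_deriv (by simp)
  -- A bound for the `x`-derivative of the integrand, uniform in `t ∈ [0, 1]` and `y` near `x`.
  obtain ⟨C, hC⟩ := (isCompact_closedBall (0 : ℝ) (|x| + 1)).exists_bound_of_continuousOn
    hd.continuousOn
  refine (intervalIntegral.hasDerivAt_integral_of_dominated_loc_of_deriv_le
    (F := fun y t => t ^ m * φ (t * y)) (F' := fun y t => t ^ (m + 1) * deriv φ (t * y))
    (bound := fun _ => C) (Metric.ball_mem_nhds x one_pos) ?_ ?_ ?_ ?_ ?_ ?_).2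
  · exact Filter.Eventually.of_forall fun y =>
      (by fun_prop : Continuous fun t : ℝ => t ^ m * φ (t * y)).aestronglyMeasurable
  · exact (by fun_prop : Continuous fun t : ℝ => t ^ m * φ (t * x)).intervalIntegrable _ _
  · exact (by fun_prop :
      Continuous fun t : ℝ => t ^ (m + 1) * deriv φ (t * x)).aestronglyMeasurable
  · refine Filter.Eventually.of_forall fun t ht y hy => ?_
    rw [Set.uIoc_of_le zero_le_one] at ht
    have hy' : |y| ≤ |x| + 1 := by
      have h1 : |y - x| < 1 := by simpa [Real.dist_eq] using hy
      have h2 := abs_sub_abs_le_abs_sub y x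
      linarith
    have hty : t * y ∈ Metric.closedBall (0 : ℝ) (|x| + 1) := by
      rw [mem_closedBall_zero_iff, Real.norm_eq_abs, abs_mul, abs_of_pos ht.1]
      nlinarith [abs_nonneg y, ht.1, ht.2]
    have hb := hC _ hty
    rw [norm_mul, norm_pow, Real.norm_eq_abs t, abs_of_pos ht.1]
    calc t ^ (m + 1) * ‖deriv φ (t * y)‖ ≤ 1 * ‖deriv φ (t * y)‖ := by
          gcongr
          exact pow_le_one₀ ht.1.le ht.2
      _ ≤ C := by simpa using hb
  · exact intervalIntegrable_const
  · refine Filter.Eventually.of_forall fun t _ y _ => ?_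
    have h1 : HasDerivAt φ (deriv φ (t * y)) (t * y) :=
      (hφ.differentiable (by simp) _).hasDerivAt
    have h2 : HasDerivAt (fun y : ℝ => t * y) t y := by
      simpa using (hasDerivAt_id y).const_mul t
    exact ((h1.comp y h2).const_mul (t ^ m)).congr_deriv (by ring)

lemma deriv_hadamardInt (m : ℕ) {φ : ℝ → ℝ} (hφ : ContDiff ℝ (⊤ : ℕ∞) φ) :
    deriv (hadamardInt m φ) = hadamardInt (m + 1) (deriv φ) :=
  funext fun x => (hasDerivAt_hadamardInt m hφ x).deriv

lemma contDiff_hadamardInt (m : ℕ) {φ : ℝ → ℝ} (hφ : ContDiff ℝ (⊤ : ℕ∞) φ) :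
    ContDiff ℝ (⊤ : ℕ∞) (hadamardInt m φ) := by
  rw [contDiff_infty]
  intro n
  have hdiff (m : ℕ) {φ : ℝ → ℝ} (hφ : ContDiff ℝ (⊤ : ℕ∞) φ) :
      Differentiable ℝ (hadamardInt m φ) :=
    fun x => (hasDerivAt_hadamardInt m hφ x).differentiableAt
  induction n generalizing m φ with
  | zero => exact contDiff_zero.2 (hdiff m hφ).continuous
  | succ n ih =>
    push_cast
    refine contDiff_succ_iff_deriv.2 ⟨hdiff m hφ, by simp, ?_⟩
    rw [deriv_hadamardInt m hφ]
    exact ih (m + 1) (contDiff_infty_iff_deriv.1 hφ).2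

lemma iteratedDeriv_hadamardInt_zero (j m : ℕ) {φ : ℝ → ℝ} (hφ : ContDiff ℝ (⊤ : ℕ∞) φ) :
    iteratedDeriv j (hadamardInt m φ) 0 = iteratedDeriv j φ 0 / (m + j + 1) := by
  induction j generalizing m φ with
  | zero => simp [hadamardInt, integral_pow, div_eq_inv_mul]
  | succ j ih =>
    rw [iteratedDeriv_succ', deriv_hadamardInt m hφ, ih _ (contDiff_infty_iff_deriv.1 hφ).2,
      iteratedDeriv_succ']
    push_cast
    congr 1
    ring

lemma eq_mul_hadamardInt {w : ℝ → ℝ} (hw : ContDiff ℝ (⊤ : ℕ∞) w) (hw0 : w 0 = 0) (x : ℝ) :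
    w x = x * hadamardInt 0 (deriv w) x := by
  have hd : Continuous (deriv w) := hw.continuous_deriv (by simp)
  have h := intervalIntegral.integral_eq_sub_of_hasDerivAt (a := 0) (b := 1)
    (f := fun t => w (t * x)) (f' := fun t => x * deriv w (t * x))
    (fun t _ => by
      have h1 : HasDerivAt w (deriv w (t * x)) (t * x) :=
        (hw.differentiable (by simp) _).hasDerivAt
      have h2 : HasDerivAt (fun t : ℝ => t * x) x t := by
        simpa using (hasDerivAt_id t).mul_const x
      exact (h1.comp t h2).congr_deriv (mul_comm _ _))
    ((by fun_prop : Continuous fun t : ℝ => x * deriv w (t * x)).intervalIntegrable _ _)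
  rw [intervalIntegral.integral_const_mul] at h
  simp only [hadamardInt, pow_zero, one_mul]
  simpa [hw0] using h.symm

/-- Iterated Hadamard lemma: a smooth function vanishing to order exactly `p` at `0`, with positive
`p`-th derivative there, is `x ^ p` times a smooth function that is positive at `0`. -/
lemma exists_smooth_factor (p : ℕ) {w : ℝ → ℝ} (hw : ContDiff ℝ (⊤ : ℕ∞) w)
    (hflat : ∀ k < p, iteratedDeriv k w 0 = 0) (hpos : 0 < iteratedDeriv p w 0) :
    ∃ g : ℝ → ℝ, ContDiff ℝ (⊤ : ℕ∞) g ∧ 0 < g 0 ∧ ∀ x, w x = x ^ p * g x := by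
  induction p generalizing w with
  | zero => exact ⟨w, hw, by simpa using hpos, by simp⟩
  | succ p ih =>
    have hd := (contDiff_infty_iff_deriv.1 hw).2
    have hit (j : ℕ) : iteratedDeriv j (hadamardInt 0 (deriv w)) 0
        = iteratedDeriv (j + 1) w 0 / (j + 1) := by
      rw [iteratedDeriv_hadamardInt_zero j 0 hd, iteratedDeriv_succ']
      simp
    obtain ⟨g, hg, hg0, hfac⟩ := ih (contDiff_hadamardInt 0 hd)
      (fun k hk => by rw [hit, hflat (k + 1) (by lia), zero_div])
      (by rw [hit]; positivity)
    refine ⟨g, hg, hg0, fun x => ?_⟩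
    rw [eq_mul_hadamardInt hw (by simpa using hflat 0 (by lia)) x, hfac x]
    ring

theorem smoothing_of_inverse_sqrt_edge_singularity
    (p : ℕ) (hp : 4 ≤ p) (hpe : Even p)
    (w : ℝ → ℝ) (hw : ContDiff ℝ (⊤ : ℕ∞) w) (hw0 : w 0 = 0)
    (hflat : ∀ k : ℕ, 1 ≤ k → k ≤ p - 1 → iteratedDeriv k w 0 = 0)
    (hpos : 0 < iteratedDeriv p w 0)
    (Φ : ℝ → ℝ) (hΦ : ContDiff ℝ (⊤ : ℕ∞) Φ) :
    ∃ δ > (0 : ℝ),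
      ContDiffOn ℝ (p / 2 - 1 : ℕ)
        (fun x : ℝ => if x = 0 then 0 else Φ (w x) * deriv w x / Real.sqrt (w x))
        (Set.Ico 0 δ) := by
  obtain ⟨g, hg, hg0, hfac⟩ := exists_smooth_factor p hw
    (fun k hk => by
      rcases Nat.eq_zero_or_pos k with rfl | hk0
      · simpa using hw0
      · exact hflat k hk0 (by lia))
    hpos
  obtain ⟨r, rfl⟩ := hpe
  -- With `p = 2 * q` and `q = n + 2`, the exponent `q - 1 = n + 1` is visibly positive.
  obtain ⟨n, rfl⟩ : ∃ n, r = n + 2 := ⟨r - 2, by lia⟩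
  set h : ℝ → ℝ := fun x => (2 * n + 4) * g x + x * deriv g x with hh
  have hgd : ContDiff ℝ (⊤ : ℕ∞) (deriv g) := (contDiff_infty_iff_deriv.1 hg).2
  have hhs : ContDiff ℝ (⊤ : ℕ∞) h := by fun_prop
  have hdw (x : ℝ) : deriv w x = x ^ (2 * n + 3) * h x := by
    have h1 := (hasDerivAt_pow (n + 2 + (n + 2)) x).mul
      (hg.differentiable (by simp) x).hasDerivAt
    have h2 : w = (fun x => x ^ (n + 2 + (n + 2))) * g := funext hfac
    rw [h2, h1.deriv, hh, show n + 2 + (n + 2) - 1 = 2 * n + 3 by lia]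
    push_cast
    ring
  obtain ⟨δ, hδ, hball⟩ := Metric.eventually_nhds_iff.1
    (hg.continuous.continuousAt.eventually (lt_mem_nhds hg0))
  have hgpos (x : ℝ) (hx : x ∈ Set.Ico 0 δ) : 0 < g x :=
    hball (by simpa [abs_of_nonneg hx.1] using hx.2)
  refine ⟨δ, hδ, contDiffOn_infty.1 ?_ _⟩
  have hsmooth : ContDiffOn ℝ (⊤ : ℕ∞)
      (fun x => Φ (w x) * (x ^ (n + 1) * h x / √(g x))) (Set.Ico 0 δ) := by
    refine (hΦ.comp hw).contDiffOn.mul (ContDiffOn.div ?_ ?_ ?_)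
    · exact ((contDiff_id.pow (n + 1)).mul hhs).contDiffOn
    · exact hg.contDiffOn.sqrt fun x hx => (hgpos x hx).ne'
    · exact fun x hx => (Real.sqrt_pos.2 (hgpos x hx)).ne'
  refine hsmooth.congr fun x hx => ?_
  by_cases hx0 : x = 0
  · simp [hx0]
  · have hs : √(w x) = x ^ (n + 2) * √(g x) := by
      rw [hfac x, pow_add, Real.sqrt_mul (mul_self_nonneg _),
        Real.sqrt_mul_self (pow_nonneg hx.1 _)]
    have hsg := (Real.sqrt_pos.2 (hgpos x hx)).ne'
    simp only [hx0, if_false]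
    rw [hs, hdw x]
    field_simp
    ring
end
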